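/- Let K_V be the complete graph on a finite vertex set V with n = |V| vertices and nonnegative edge weights c satisfying the triangle inequality, and let p be an integer with 1 ≤ p ≤ ⌈(n − 2⌈n/5⌉)/3⌉. Let μ₂ be the minimum weight of a 2-factor of K_V and let μ_T be the minimum weight of a spanning forest of K_V with exactly p connected components. Then there exists a Hamiltonian p-median solution of K_V with total weight at most max(2·μ₂, μ₂ + 2·μ_T). -/

import Mathlib

open SimpleGraph

/-- A 2-factor of a simple graph `G`: a spanning subgraph in which every vertex has
degree exactly 2. -/
def IsTwoFactor {V : Type*} {G : SimpleGraph V} (F : G.Subgraph) : Prop :=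
  F.IsSpanning ∧ ∀ v : V, (F.neighborSet v).ncard = 2

/-- The total weight of a subgraph: the sum of the weights of its edges. -/
noncomputable def subgraphWeight {V : Type*} {G : SimpleGraph V} (c : Sym2 V → ℝ)
    (F : G.Subgraph) : ℝ :=
  ∑ᶠ e ∈ F.edgeSet, c e

/-- A Hamiltonian `p`-median solution of `G`: a spanning subgraph with all degrees 2
and exactly `p` connected components (i.e. `p` vertex-disjoint cycles, each with at
least 3 vertices, whose vertex sets partition `V`). -/
def IsHpMedianSolution {V : Type*} {G : SimpleGraph V} (p : ℕ) (H : G.Subgraph) : Prop :=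
  IsTwoFactor H ∧ Nat.card H.coe.ConnectedComponent = p

/-!
Orient the cycles of the 2-factor, so that it becomes a permutation `σ₀` without cycles of length
`1` or `2`. Multiplying a permutation by the transposition `swap u v` merges the cycles of `u` and
`v` if they are distinct, and splits their common cycle otherwise.

If `σ₀` has too many cycles, merge cycles along edges of the forest. Each merge costs at most twice
the length of the edge, and as the forest has at most `p` components, the number of cycles gets
down to `p`.

If `σ₀` has too few cycles, the bound on `p` forces a cycle of length at least `6` as long as there
are fewer than `p` of them; split off three consecutive vertices. Cutting each time at the arc
created by an earlier split, if there is one, every final cycle is a segment of a cycle of `σ₀`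
closed up by one arc. That arc is at most as long as the segment, so the length at most doubles.
-/

section CycleCount

open Equiv Equiv.Perm

variable {V : Type*} {σ : Perm V} {u v : V}

theorem sameCycle_setoid_le {r : Setoid V} (h : ∀ x, r x (σ x)) : SameCycle.setoid σ ≤ r := by
  rintro x _ ⟨i, rfl⟩
  induction i using Int.induction_on with
  | zero => exact r.refl _
  | succ i ih =>
    rw [add_comm, zpow_one_add, Perm.mul_apply]
    exact r.trans ih (h _)
  | pred i ih =>
    have hstep := h ((σ ^ (-(i : ℤ) - 1)) x)
    rw [← Perm.mul_apply, ← zpow_one_add, add_sub_cancel] at hstep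
    exact r.trans ih (r.symm hstep)

/-- The number of cycles of a permutation, fixed points included. -/
noncomputable def numCycles (σ : Perm V) : ℕ :=
  Nat.card (Quotient (SameCycle.setoid σ))

theorem numCycles_le_card_quotient [Finite V] {r : Setoid V} (h : r ≤ SameCycle.setoid σ) :
    numCycles σ ≤ Nat.card (Quotient r) :=
  Nat.card_le_card_of_surjective (Quotient.map id h) <|
    Quotient.ind fun x => ⟨Quotient.mk r x, rfl⟩

theorem reachableSetoid_le {G : SimpleGraph V} {r : Setoid V} (h : ∀ u v, G.Adj u v → r u v) :
    G.reachableSetoid ≤ r := by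
  rintro u v ⟨w⟩
  induction w with
  | nil => exact r.refl _
  | cons huv _ ih => exact r.trans (h _ _ huv) ih

theorem numCycles_le_card_connectedComponent [Finite V] {G : SimpleGraph V}
    (h : ∀ u v, G.Adj u v → σ.SameCycle u v) : numCycles σ ≤ Nat.card G.ConnectedComponent :=
  numCycles_le_card_quotient (reachableSetoid_le h)

section MulSwap

variable [DecidableEq V]

theorem mul_swap_apply_of_ne_of_ne {x : V} (hu : x ≠ u) (hv : x ≠ v) :
    (σ * swap u v) x = σ x := by
  rw [Perm.mul_apply, swap_apply_of_ne_of_ne hu hv]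

theorem sameCycle_mul_swap [Finite V] (h : ¬ σ.SameCycle u v) :
    (σ * swap u v).SameCycle u v := by
  set τ := σ * swap u v with hτ
  have key (i : ℕ) : τ.SameCycle u ((σ ^ (i + 1)) v) := by
    have hτu : τ u = σ v := by simp [hτ]
    induction i with
    | zero => rw [zero_add, pow_one, ← hτu, sameCycle_apply_right]
    | succ i ih =>
      by_cases hv : (σ ^ (i + 1)) v = v
      · rw [pow_succ', Perm.mul_apply, hv, ← hτu, sameCycle_apply_right]
      · have hu : (σ ^ (i + 1)) v ≠ u := fun hu => h (SameCycle.symm ⟨(i + 1 : ℕ), hu⟩)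
        rwa [pow_succ', Perm.mul_apply, ← mul_swap_apply_of_ne_of_ne hu hv, sameCycle_apply_right]
  have hperiod := key (orderOf σ - 1)
  rwa [Nat.sub_add_cancel (orderOf_pos σ), pow_orderOf_eq_one] at hperiod

theorem not_sameCycle_mul_swap [Finite V] (huv : u ≠ v) (h : σ.SameCycle u v) :
    ¬ (σ * swap u v).SameCycle u v := by
  obtain ⟨k, hk, hmin⟩ : ∃ k : ℕ, (σ ^ k) u = v ∧ ∀ i < k, (σ ^ i) u ≠ v :=
    ⟨Nat.find h.exists_nat_pow_eq, Nat.find_spec h.exists_nat_pow_eq,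
      fun _ => Nat.find_min h.exists_nat_pow_eq⟩
  have hk0 : 0 < k := Nat.pos_of_ne_zero fun h0 => huv (by simpa [h0] using hk)
  have hreturn (i : ℕ) (hi : 0 < i) (hik : i ≤ k) : (σ ^ i) u ≠ u := fun hiu =>
    hmin (k - i) (by lia) (by rw [← hk, ← Nat.sub_add_cancel hik, pow_add, Perm.mul_apply, hiu,
      Nat.add_sub_cancel])
  -- `σ * swap u v` cycles through the arc `σ u, …, σ ^ k u = v`, which does not contain `u`.
  let arc : Set V := {x | ∃ i, 0 < i ∧ i ≤ k ∧ (σ ^ i) u = x}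
  have hmaps : Set.MapsTo (σ * swap u v) arc arc := by
    rintro _ ⟨i, hi, hik, rfl⟩
    rcases hik.eq_or_lt with rfl | hlt
    · exact ⟨1, one_pos, hk0, by simp [hk]⟩
    · refine ⟨i + 1, i.succ_pos, hlt, ?_⟩
      rw [mul_swap_apply_of_ne_of_ne (hreturn i hi hik) (hmin i hlt), pow_succ', Perm.mul_apply]
  intro hsame
  obtain ⟨n, hn⟩ := hsame.symm.exists_nat_pow_eq
  obtain ⟨i, hi, hik, hiu⟩ : u ∈ arc := by
    rw [← hn, ← iterate_eq_pow]
    exact hmaps.iterate n ⟨k, hk0, le_rfl, hk⟩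
  exact hreturn i hi hik hiu

theorem sameCycle_setoid_le_mul_swap [Finite V] (h : ¬ σ.SameCycle u v) :
    SameCycle.setoid σ ≤ SameCycle.setoid (σ * swap u v) := by
  have huv := sameCycle_mul_swap h
  refine sameCycle_setoid_le fun x => ?_
  change (σ * swap u v).SameCycle x (σ x)
  rcases eq_or_ne x u with rfl | hu
  · simpa using huv.apply_right
  rcases eq_or_ne x v with rfl | hv
  · simpa using huv.symm.apply_right
  rw [← mul_swap_apply_of_ne_of_ne hu hv, sameCycle_apply_right]

open scoped Classical in
theorem sameCycle_setoid_mul_swap [Finite V] (h : ¬ σ.SameCycle u v) :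
    SameCycle.setoid (σ * swap u v) = Setoid.ker fun x =>
      Quotient.mk (SameCycle.setoid σ) (if σ.SameCycle v x then u else x) := by
  apply le_antisymm
  · refine sameCycle_setoid_le fun x => Quotient.sound ?_
    change σ.SameCycle _ _
    have hvu : ¬ σ.SameCycle v u := fun hvu => h hvu.symm
    rcases eq_or_ne x u with rfl | hu
    · simp [hvu, SameCycle.refl]
    rcases eq_or_ne x v with rfl | hv
    · simp [hvu, SameCycle.refl]
    simp only [mul_swap_apply_of_ne_of_ne hu hv, sameCycle_apply_right]
    split_ifs
    · exact .rfl
    · exact SameCycle.rfl.apply_right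
  · intro x y hxy
    have hmerge (z : V) : (σ * swap u v).SameCycle z (if σ.SameCycle v z then u else z) := by
      split_ifs with hz
      · exact (sameCycle_setoid_le_mul_swap h hz.symm).trans (sameCycle_mul_swap h).symm
      · exact .rfl
    exact (hmerge x).trans ((sameCycle_setoid_le_mul_swap h (Quotient.exact hxy)).trans
      (hmerge y).symm)

theorem numCycles_mul_swap_add_one [Finite V] (h : ¬ σ.SameCycle u v) :
    numCycles (σ * swap u v) + 1 = numCycles σ := by
  classical
  have hrange : (Set.range fun x =>
      Quotient.mk (SameCycle.setoid σ) (if σ.SameCycle v x then u else x)) =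
      Set.univ \ {Quotient.mk _ v} := by
    ext q
    induction q using Quotient.ind with | _ x
    simp only [Set.mem_range, Set.mem_sdiff, Set.mem_univ, true_and, Set.mem_singleton_iff,
      Quotient.eq]
    change (∃ y, σ.SameCycle _ x) ↔ ¬ σ.SameCycle x v
    constructor
    · rintro ⟨y, hy⟩ hxv
      split_ifs at hy with hvy
      · exact h (hy.trans hxv)
      · exact hvy (hy.trans hxv).symm
    · intro hxv
      exact ⟨x, by rw [if_neg fun hvx => hxv hvx.symm]⟩
  rw [numCycles, sameCycle_setoid_mul_swap h, Nat.card_congr (Setoid.quotientKerEquivRange _),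
    hrange, Nat.card_coe_set_eq, Set.ncard_sdiff_singleton_add_one (Set.mem_univ _), Set.ncard_univ,
    numCycles]

theorem numCycles_mul_swap [Finite V] (huv : u ≠ v) (h : σ.SameCycle u v) :
    numCycles (σ * swap u v) = numCycles σ + 1 := by
  have hcard := numCycles_mul_swap_add_one (not_sameCycle_mul_swap huv h)
  rwa [mul_swap_mul_self, eq_comm] at hcard

theorem sameCycle_setoid_mul_swap_le [Finite V] (huv : u ≠ v) (h : σ.SameCycle u v) :
    SameCycle.setoid (σ * swap u v) ≤ SameCycle.setoid σ := by
  have hle := sameCycle_setoid_le_mul_swap (not_sameCycle_mul_swap huv h)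
  rwa [mul_swap_mul_self] at hle

end MulSwap

end CycleCount

section CycleCover

open Equiv Equiv.Perm

variable {V : Type*} {σ : Perm V} {u v : V}

/-- A cycle cover: a permutation all of whose cycles have length at least 3. It encodes a 2-factor
together with an orientation of each of its cycles. -/
def IsCycleCover (σ : Perm V) : Prop :=
  ∀ x, σ x ≠ x ∧ σ (σ x) ≠ x

theorem IsCycleCover.mul_swap_of_not_sameCycle [DecidableEq V] (hσ : IsCycleCover σ)
    (h : ¬ σ.SameCycle u v) : IsCycleCover (σ * swap u v) := by
  have hσ₁ (x : V) : σ x ≠ x := (hσ x).1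
  have hσ₂ (x : V) : σ (σ x) ≠ x := (hσ x).2
  have huv₁ : σ u ≠ v := fun huv => h ⟨1, huv⟩
  have hvu₁ : σ v ≠ u := fun hvu => h (SameCycle.symm ⟨1, hvu⟩)
  have huv₂ : σ (σ u) ≠ v := fun huv => h ⟨2, huv⟩
  have hvu₂ : σ (σ v) ≠ u := fun hvu => h (SameCycle.symm ⟨2, hvu⟩)
  intro x
  simp only [Perm.mul_apply, swap_apply_def]
  grind

theorem IsCycleCover.mul_swap_pow_three [DecidableEq V] (hσ : IsCycleCover σ)
    (h4 : (σ ^ 4) v ≠ v) (h5 : (σ ^ 5) v ≠ v) :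
    IsCycleCover (σ * swap v ((σ ^ 3) v)) := by
  have hσ₁ (x : V) : σ x ≠ x := (hσ x).1
  have hσ₂ (x : V) : σ (σ x) ≠ x := (hσ x).2
  have hinj (x y : V) (hxy : σ x = σ y) : x = y := σ.injective hxy
  simp only [pow_succ, pow_zero, one_mul, Perm.mul_apply] at h4 h5 ⊢
  intro x
  simp only [Perm.mul_apply, swap_apply_def]
  grind

theorem exists_forall_sameCycle_pow_apply_ne [Finite V] {m : ℕ}
    (h : m * numCycles σ < Nat.card V) :
    ∃ v, ∀ x, σ.SameCycle v x → ∀ i, 0 < i → i ≤ m → (σ ^ i) x ≠ x := by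
  classical
  have := Fintype.ofFinite V
  have := Fintype.ofFinite (Quotient (SameCycle.setoid σ))
  rw [numCycles, mul_comm, Nat.card_eq_fintype_card, Nat.card_eq_fintype_card] at h
  obtain ⟨q, hq⟩ := Fintype.exists_lt_card_fiber_of_mul_lt_card (Quotient.mk _ : V → _) h
  induction q using Quotient.ind with | _ v
  refine ⟨v, fun x hvx i hi him hix => ?_⟩
  have hcover :
      (Finset.univ.filter fun y => Quotient.mk (SameCycle.setoid σ) y = Quotient.mk _ v) ⊆
        (Finset.range i).image fun j => (σ ^ j) x := by
    intro y hy
    have hyv : σ.SameCycle y v := Quotient.exact (Finset.mem_filter.1 hy).2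
    obtain ⟨k, rfl⟩ := (hyv.trans hvx).symm.exists_nat_pow_eq
    refine Finset.mem_image.2 ⟨k % i, Finset.mem_range.2 (k.mod_lt hi), ?_⟩
    conv_rhs => rw [← k.mod_add_div i, pow_add, Perm.mul_apply, pow_mul,
      pow_apply_eq_self_of_apply_eq_self hix]
  have hcard := (Finset.card_le_card hcover).trans Finset.card_image_le
  rw [Finset.card_range] at hcard
  lia

/-- Each cycle of `σ` is a cycle of `σ₀` or a segment of one closed up by a single new arc: a cycle
of `σ` contains at most one point where `σ` differs from `σ₀`. -/
def IsSegmentation (σ₀ σ : Perm V) : Prop :=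
  ∀ x y, σ x ≠ σ₀ x → σ y ≠ σ₀ y → σ.SameCycle x y → x = y

namespace IsSegmentation

variable {σ₀ : Perm V}

theorem refl (σ₀ : Perm V) : IsSegmentation σ₀ σ₀ :=
  fun _ _ hx => absurd rfl hx

theorem exists_cycleRep (h : IsSegmentation σ₀ σ) :
    ∃ r : V → V, (∀ x, σ.SameCycle x (r x)) ∧ (∀ x y, σ.SameCycle x y → r x = r y) ∧
      ∀ x, σ x ≠ σ₀ x → r x = x := by
  have hrep (q : Quotient (SameCycle.setoid σ)) :
      ∃ v, Quotient.mk _ v = q ∧ ∀ x, Quotient.mk _ x = q → σ x ≠ σ₀ x → v = x := by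
    by_cases hq : ∃ v, Quotient.mk _ v = q ∧ σ v ≠ σ₀ v
    · obtain ⟨v, rfl, hv⟩ := hq
      exact ⟨v, rfl, fun x hxv hx => (h x v hx hv (Quotient.exact hxv)).symm⟩
    · push Not at hq
      exact ⟨q.out, q.out_eq, fun x hxq hx => absurd (hq x hxq) hx⟩
  choose rep hrep_mk hrep_eq using hrep
  exact ⟨fun x => rep (Quotient.mk _ x), fun x => (Quotient.exact (hrep_mk _)).symm,
    fun x y hxy => congrArg rep (Quotient.sound hxy), fun x hx => hrep_eq _ x rfl hx⟩

theorem mul_swap [Finite V] [DecidableEq V] (h : IsSegmentation σ₀ σ) (huv : u ≠ v)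
    (hsame : σ.SameCycle u v) (hu : ∀ x, σ x ≠ σ₀ x → σ.SameCycle x u → x = u) :
    IsSegmentation σ₀ (σ * swap u v) := by
  have hle {x y : V} (hxy : (σ * swap u v).SameCycle x y) : σ.SameCycle x y :=
    sameCycle_setoid_mul_swap_le huv hsame hxy
  have hns := not_sameCycle_mul_swap huv hsame
  have hold {x : V} (hx : (σ * swap u v) x ≠ σ₀ x) : x = u ∨ x = v ∨ σ x ≠ σ₀ x := by
    by_contra! hne
    exact hx (by rw [mul_swap_apply_of_ne_of_ne hne.1 hne.2.1, hne.2.2])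
  -- In the cycle of `u` the only old exception is `u` itself, and `v` has been separated from it.
  have hnew {x : V} (hx : σ x ≠ σ₀ x) : ¬ (σ * swap u v).SameCycle x v := fun hxv =>
    hns (hu x hx ((hle hxv).trans hsame.symm) ▸ hxv)
  intro x y hx hy hxy
  rcases hold hx with rfl | rfl | hx₀ <;> rcases hold hy with rfl | rfl | hy₀
  · rfl
  · exact absurd hxy hns
  · exact (hu y hy₀ (hle hxy).symm).symm
  · exact absurd hxy.symm hns
  · rfl
  · exact absurd hxy.symm (hnew hy₀)
  · exact hu x hx₀ (hle hxy)
  · exact absurd hxy (hnew hx₀)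
  · exact h x y hx₀ hy₀ (hle hxy)

theorem exists_split [Finite V] (h : IsSegmentation σ₀ σ) (hσ : IsCycleCover σ)
    (hcard : 5 * numCycles σ < Nat.card V) :
    ∃ τ, IsCycleCover τ ∧ IsSegmentation σ₀ τ ∧ numCycles τ = numCycles σ + 1 := by
  classical
  obtain ⟨w, hw⟩ := exists_forall_sameCycle_pow_apply_ne hcard
  obtain ⟨r, hr, hr_eq, hr_self⟩ := h.exists_cycleRep
  have hlong := hw (r w) (hr w)
  have h3 := hlong 3 (by lia) (by lia)
  have hsame : σ.SameCycle (r w) ((σ ^ 3) (r w)) := SameCycle.rfl.pow_right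
  refine ⟨σ * swap (r w) ((σ ^ 3) (r w)),
    hσ.mul_swap_pow_three (hlong 4 (by lia) (by lia)) (hlong 5 (by lia) le_rfl),
    h.mul_swap h3.symm hsame fun x hx hxw => ?_, numCycles_mul_swap h3.symm hsame⟩
  rw [← hr_self x hx, hr_eq x w (hxw.trans (hr w).symm)]

end IsSegmentation

theorem IsCycleCover.exists_isSegmentation [Finite V] {σ₀ : Perm V} (hσ₀ : IsCycleCover σ₀) {p : ℕ}
    (hle : numCycles σ₀ ≤ p) (hp : 5 * p < Nat.card V + 5) :
    ∃ σ, IsCycleCover σ ∧ IsSegmentation σ₀ σ ∧ numCycles σ = p := by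
  induction p, hle using Nat.le_induction with
  | base => exact ⟨σ₀, hσ₀, .refl σ₀, rfl⟩
  | succ p _ ih =>
    obtain ⟨σ, hσ, hseg, rfl⟩ := ih (by lia)
    exact hseg.exists_split hσ (by lia)

section Length

variable [Fintype V] [PseudoMetricSpace V]

/-- The total length of the arcs `x → σ x` of a permutation; for a cycle cover this is the weight
of the 2-factor it encodes. -/
noncomputable def permLength (σ : Perm V) : ℝ :=
  ∑ x, dist x (σ x)

theorem permLength_mul_le (σ τ : Perm V) : permLength (σ * τ) ≤ permLength σ + permLength τ := by
  calc permLength (σ * τ)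
      ≤ ∑ x, (dist x (τ x) + dist (τ x) (σ (τ x))) :=
        Finset.sum_le_sum fun x _ => dist_triangle _ _ _
    _ = permLength σ + permLength τ := by
        rw [Finset.sum_add_distrib, Equiv.sum_comp τ fun x => dist x (σ x), add_comm]
        rfl

theorem permLength_swap [DecidableEq V] (u v : V) : permLength (swap u v) = 2 * dist u v := by
  rcases eq_or_ne u v with rfl | huv
  · simp [permLength]
  · rw [permLength, Finset.sum_eq_add u v huv]
    · rw [swap_apply_left, swap_apply_right, dist_comm v u, two_mul]
    · intro x _ hx
      rw [swap_apply_of_ne_of_ne hx.1 hx.2, _root_.dist_self]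
    · simp
    · simp

-- Let `g x` be the head of the new arc in the cycle of `x`. Summing the triangle inequalities along
-- the old arcs, the potential `dist (g x) x` grows from `0` to the length of the new arc, so the
-- new arc is at most as long as the old arcs together.
theorem IsSegmentation.permLength_le {σ₀ : Perm V} (h : IsSegmentation σ₀ σ) :
    permLength σ ≤ 2 * permLength σ₀ := by
  obtain ⟨r, -, hr, hr_self⟩ := h.exists_cycleRep
  let g (x : V) : V := σ (r x)
  have hg (x : V) : g (σ x) = g x := congrArg σ (hr _ _ (SameCycle.rfl.apply_left))
  have hpotential : ∑ x, dist (g (σ x)) (σ x) = ∑ x, dist (g x) x :=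
    Equiv.sum_comp σ fun x => dist (g x) x
  have hpointwise (x : V) : dist x (σ x) + dist (g (σ x)) (σ x) ≤
      2 * dist x (σ₀ x) + dist (g x) x := by
    rw [hg]
    by_cases hx : σ x = σ₀ x
    · rw [← hx]
      linarith [dist_triangle (g x) x (σ x)]
    · have hgx : g x = σ x := congrArg σ (hr_self x hx)
      rw [hgx, _root_.dist_self, dist_comm (σ x) x]
      linarith [dist_nonneg (x := x) (y := σ₀ x)]
  have hsum := Finset.sum_le_sum fun x (_ : x ∈ Finset.univ) => hpointwise x
  rw [Finset.sum_add_distrib, Finset.sum_add_distrib, ← Finset.mul_sum, hpotential] at hsum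
  exact le_of_add_le_add_right hsum

theorem IsCycleCover.exists_join (hσ : IsCycleCover σ) (u v : V) :
    ∃ τ, IsCycleCover τ ∧ SameCycle.setoid σ ≤ SameCycle.setoid τ ∧ τ.SameCycle u v ∧
      numCycles σ ≤ numCycles τ + 1 ∧ permLength τ ≤ permLength σ + 2 * dist u v := by
  classical
  by_cases huv : σ.SameCycle u v
  · exact ⟨σ, hσ, le_rfl, huv, Nat.le_succ _, le_add_of_nonneg_right (by positivity)⟩
  · exact ⟨σ * swap u v, hσ.mul_swap_of_not_sameCycle huv, sameCycle_setoid_le_mul_swap huv,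
      sameCycle_mul_swap huv, (numCycles_mul_swap_add_one huv).ge,
      permLength_swap u v ▸ permLength_mul_le σ (swap u v)⟩

variable {c : Sym2 V → ℝ} (hc : ∀ u v : V, dist u v ≤ c s(u, v))
include hc

theorem IsCycleCover.exists_join_edges (hσ : IsCycleCover σ) {p : ℕ} (hp : p ≤ numCycles σ)
    (E : Finset (Sym2 V)) :
    ∃ τ, IsCycleCover τ ∧ p ≤ numCycles τ ∧
      (p < numCycles τ → ∀ u v, s(u, v) ∈ E → τ.SameCycle u v) ∧
      permLength τ ≤ permLength σ + 2 * ∑ e ∈ E, c e := by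
  classical
  induction E using Finset.induction_on with
  | empty => exact ⟨σ, hσ, hp, by simp, by simp⟩
  | insert e E he ih =>
    obtain ⟨τ, hτ, hpτ, hE, hlen⟩ := ih
    rw [Finset.sum_insert he]
    induction e with | _ a b
    have hab := hc a b
    rcases hpτ.eq_or_lt with heq | hlt
    · exact ⟨τ, hτ, hpτ, fun h => absurd heq h.ne, by linarith [dist_nonneg (x := a) (y := b)]⟩
    · obtain ⟨τ', hτ', hle, hτ'ab, hcard, hlen'⟩ := hτ.exists_join a b
      refine ⟨τ', hτ', by lia, fun _ u v huv => ?_, by linarith⟩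
      rcases Finset.mem_insert.1 huv with huv | huv
      · rcases Sym2.eq_iff.1 huv with ⟨rfl, rfl⟩ | ⟨rfl, rfl⟩
        exacts [hτ'ab, hτ'ab.symm]
      · exact hle (hE hlt u v huv)

theorem IsCycleCover.exists_numCycles_eq_of_card_connectedComponent_le (hσ : IsCycleCover σ)
    {p : ℕ} (hp : p ≤ numCycles σ) {T : SimpleGraph V} (hT : Nat.card T.ConnectedComponent ≤ p) :
    ∃ τ : Perm V, IsCycleCover τ ∧ numCycles τ = p ∧
      permLength τ ≤ permLength σ + 2 * ∑ᶠ e ∈ T.edgeSet, c e := by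
  obtain ⟨τ, hτ, hpτ, hE, hlen⟩ := hσ.exists_join_edges hc hp T.edgeSet.toFinite.toFinset
  refine ⟨τ, hτ, le_antisymm (not_lt.1 fun hlt => ?_) hpτ, ?_⟩
  · refine hlt.not_ge <| (numCycles_le_card_connectedComponent fun u v huv => ?_).trans hT
    exact hE hlt u v (by simpa using huv)
  · rwa [finsum_mem_eq_finite_toFinset_sum _ T.edgeSet.toFinite]

end Length

end CycleCover

section PermGraph

open Equiv Equiv.Perm

variable {V : Type*} {σ : Perm V}

/-- The graph of a permutation, whose edges are the arcs `x → σ x` with `σ x ≠ x`, unoriented. -/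
def permGraph (σ : Perm V) : SimpleGraph V :=
  SimpleGraph.fromRel fun x y => σ x = y

theorem reachableSetoid_permGraph (σ : Perm V) :
    (permGraph σ).reachableSetoid = SameCycle.setoid σ := by
  apply le_antisymm
  · refine reachableSetoid_le fun x y hxy => ?_
    rcases ((SimpleGraph.fromRel_adj _ x y).1 hxy).2 with h | h
    exacts [⟨1, h⟩, SameCycle.symm ⟨1, h⟩]
  · refine sameCycle_setoid_le fun x => ?_
    change (permGraph σ).Reachable x (σ x)
    by_cases hx : x = σ x
    · exact hx ▸ .refl x
    · exact SimpleGraph.Adj.reachable ((SimpleGraph.fromRel_adj _ _ _).2 ⟨hx, .inl rfl⟩)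

theorem card_connectedComponent_permGraph (σ : Perm V) :
    Nat.card (permGraph σ).ConnectedComponent = numCycles σ := by
  rw [numCycles, ← reachableSetoid_permGraph]
  rfl

namespace IsCycleCover

theorem permGraph_adj (hσ : IsCycleCover σ) {x y : V} :
    (permGraph σ).Adj x y ↔ σ x = y ∨ σ y = x := by
  rw [permGraph, SimpleGraph.fromRel_adj, and_iff_right_iff_imp]
  rintro h rfl
  exact (hσ x).1 (or_self_iff.1 h)

theorem ncard_neighborSet_permGraph (hσ : IsCycleCover σ) (x : V) :
    ((permGraph σ).neighborSet x).ncard = 2 := by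
  have hpair : (permGraph σ).neighborSet x = {σ x, σ⁻¹ x} := by
    ext y
    rw [SimpleGraph.mem_neighborSet, hσ.permGraph_adj, Set.mem_insert_iff, Set.mem_singleton_iff,
      Perm.eq_inv_iff_eq, eq_comm (a := σ x)]
  rw [hpair, Set.ncard_pair]
  rw [Ne, Perm.eq_inv_iff_eq]
  exact (hσ x).2

theorem injective_edge (hσ : IsCycleCover σ) : Function.Injective fun x => s(x, σ x) := by
  intro x y hxy
  rcases Sym2.eq_iff.1 hxy with ⟨h, -⟩ | ⟨rfl, h⟩
  · exact h
  · exact absurd h (hσ y).2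

theorem edgeSet_permGraph (hσ : IsCycleCover σ) :
    (permGraph σ).edgeSet = Set.range fun x => s(x, σ x) := by
  ext e
  induction e with | _ x y
  rw [SimpleGraph.mem_edgeSet, hσ.permGraph_adj]
  constructor
  · rintro (rfl | rfl)
    exacts [⟨x, rfl⟩, ⟨y, Sym2.eq_swap⟩]
  · rintro ⟨z, hz⟩
    rcases Sym2.eq_iff.1 hz with ⟨rfl, h⟩ | ⟨rfl, h⟩
    exacts [.inl h, .inr h]

theorem finsum_mem_edgeSet_permGraph [Fintype V] [PseudoMetricSpace V] (hσ : IsCycleCover σ)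
    {c : Sym2 V → ℝ} (hc : ∀ x y : V, x ≠ y → dist x y = c s(x, y)) :
    ∑ᶠ e ∈ (permGraph σ).edgeSet, c e = permLength σ := by
  rw [hσ.edgeSet_permGraph, finsum_mem_range hσ.injective_edge, finsum_eq_sum_of_fintype]
  exact Finset.sum_congr rfl fun x _ => (hc _ _ (hσ x).1.symm).symm

end IsCycleCover

end PermGraph

section TwoRegular

variable {V : Type*} {G : SimpleGraph V}

theorem exists_perm_getVert_of_isCycle {v : V} {w : G.Walk v v} (hw : w.IsCycle) :
    ∃ π : Equiv.Perm V, ∀ i < w.length, π (w.getVert i) = w.getVert (i + 1) := by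
  classical
  have hlen : w.support.dropLast.length = w.length := by simp
  have hget (i : ℕ) (hi : i < w.support.dropLast.length) :
      w.support.dropLast[i] = w.getVert i := by
    rw [List.getElem_dropLast, Walk.support_getElem_eq_getVert]
  refine ⟨w.support.dropLast.formPerm, fun i hi => ?_⟩
  have hnext := List.formPerm_apply_getElem _ hw.nodup_dropLast_support i (hlen ▸ hi)
  rw [hget, hget, hlen] at hnext
  rw [hnext]
  rcases (Nat.succ_le_of_lt hi).eq_or_lt with hlast | hlt
  · rw [← Nat.succ_eq_add_one, hlast, Nat.mod_self, Walk.getVert_length, Walk.getVert_zero]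
  · rw [Nat.mod_eq_of_lt hlt]

theorem exists_perm_of_isCycle {v : V} {w : G.Walk v v} (hw : w.IsCycle) :
    ∃ π : Equiv.Perm V, ∀ x ∈ w.support, G.Adj x (π x) ∧ π (π x) ≠ x := by
  obtain ⟨π, hπ⟩ := exists_perm_getVert_of_isCycle hw
  refine ⟨π, fun x hx => ?_⟩
  obtain ⟨i, hi, rfl⟩ : ∃ i < w.length, w.getVert i = x := by
    obtain ⟨i, rfl, hi⟩ := Walk.mem_support_iff_exists_getVert.1 hx
    rcases hi.lt_or_eq with hlt | rfl
    · exact ⟨i, hlt, rfl⟩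
    · exact ⟨0, hw.three_le_length.trans_lt' (by simp), by simp⟩
  refine ⟨hπ i hi ▸ w.adj_getVert_succ hi, ?_⟩
  rw [hπ i hi]
  rcases (Nat.succ_le_of_lt hi).lt_or_eq with hlt | hlast
  · rw [hπ (i + 1) hlt]
    exact (hw.getVert_sub_one_ne_getVert_add_one hlt.le).symm
  · have hπv : π v = w.snd := by simpa using hπ 0 (by lia)
    have hpenult : w.getVert i = w.penultimate := congrArg w.getVert (Nat.eq_sub_of_add_eq hlast)
    rw [hpenult, ← Nat.succ_eq_add_one, hlast, Walk.getVert_length, hπv]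
    exact hw.snd_ne_penultimate

theorem exists_perm_connectedComponent [Finite V] (hG : ∀ v, (G.neighborSet v).ncard = 2)
    (C : G.ConnectedComponent) :
    ∃ π : Equiv.Perm V, ∀ x ∈ C.supp, G.Adj x (π x) ∧ π (π x) ≠ x := by
  have hcycles : G.IsCycles := fun v _ => hG v
  obtain ⟨v, hv⟩ := C.nonempty_supp
  obtain ⟨w, hw, hsupp⟩ := hcycles.exists_cycle_toSubgraph_verts_eq_connectedComponentSupp hv
    (Set.nonempty_of_ncard_ne_zero (by simp [hG]))
  obtain ⟨π, hπ⟩ := exists_perm_of_isCycle hw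
  exact ⟨π, fun x hx => hπ x (by rwa [← hsupp, Walk.mem_verts_toSubgraph] at hx)⟩

theorem exists_isCycleCover_forall_adj [Finite V] (hG : ∀ v, (G.neighborSet v).ncard = 2) :
    ∃ σ : Equiv.Perm V, IsCycleCover σ ∧ ∀ x, G.Adj x (σ x) := by
  choose π hπ using exists_perm_connectedComponent hG
  let f (x : V) : V := π (G.connectedComponentMk x) x
  have hadj (x : V) : G.Adj x (f x) := (hπ _ x rfl).1
  have hcomp (x : V) : G.connectedComponentMk (f x) = G.connectedComponentMk x :=
    (ConnectedComponent.connectedComponentMk_eq_of_adj (hadj x)).symm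
  have hinj : Function.Injective f := by
    intro x y hxy
    have hxy' : G.connectedComponentMk x = G.connectedComponentMk y := by
      rw [← hcomp x, hxy, hcomp y]
    exact (π (G.connectedComponentMk y)).injective (by simpa only [f, hxy'] using hxy)
  refine ⟨Equiv.ofBijective f hinj.bijective_of_finite, fun x => ⟨(hadj x).ne', ?_⟩, hadj⟩
  change π (G.connectedComponentMk (f x)) (f x) ≠ x
  rw [hcomp]
  exact (hπ _ x rfl).2

theorem exists_isCycleCover_permGraph_eq [Finite V] (hG : ∀ v, (G.neighborSet v).ncard = 2) :
    ∃ σ : Equiv.Perm V, IsCycleCover σ ∧ permGraph σ = G := by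
  obtain ⟨σ, hσ, hadj⟩ := exists_isCycleCover_forall_adj hG
  have hle {x y : V} (hxy : (permGraph σ).Adj x y) : G.Adj x y := by
    rcases hσ.permGraph_adj.1 hxy with rfl | rfl
    exacts [hadj x, (hadj y).symm]
  have hnbhd (x : V) : (permGraph σ).neighborSet x = G.neighborSet x :=
    Set.eq_of_subset_of_ncard_le (fun _ => hle) (by rw [hG, hσ.ncard_neighborSet_permGraph])
  refine ⟨σ, hσ, ?_⟩
  ext x y
  exact Set.ext_iff.1 (hnbhd x) y

end TwoRegular

section Median

variable {V : Type*}

theorem subgraphWeight_eq_finsum_spanningCoe {G : SimpleGraph V} (c : Sym2 V → ℝ)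
    (F : G.Subgraph) : subgraphWeight c F = ∑ᶠ e ∈ F.spanningCoe.edgeSet, c e := by
  rw [Subgraph.edgeSet_spanningCoe, subgraphWeight]

theorem card_connectedComponent_coe_of_isSpanning {G : SimpleGraph V} {F : G.Subgraph}
    (hF : F.IsSpanning) :
    Nat.card F.coe.ConnectedComponent = Nat.card F.spanningCoe.ConnectedComponent :=
  Nat.card_congr (F.spanningCoeEquivCoeOfSpanning hF).connectedComponentEquiv.symm

theorem IsCycleCover.exists_isHpMedianSolution {σ : Equiv.Perm V} (hσ : IsCycleCover σ) :
    ∃ H : (⊤ : SimpleGraph V).Subgraph,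
      IsHpMedianSolution (numCycles σ) H ∧ H.spanningCoe = permGraph σ := by
  let H : (⊤ : SimpleGraph V).Subgraph := toSubgraph (permGraph σ) le_top
  have hspan : H.IsSpanning := toSubgraph.isSpanning _ le_top
  have hcoe : H.spanningCoe = permGraph σ := rfl
  refine ⟨H, ⟨⟨hspan, hσ.ncard_neighborSet_permGraph⟩, ?_⟩, hcoe⟩
  rw [card_connectedComponent_coe_of_isSpanning hspan, hcoe, card_connectedComponent_permGraph]

theorem exists_pseudoMetricSpace_dist_eq {c : Sym2 V → ℝ} (hc : ∀ e, 0 ≤ c e)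
    (htri : ∀ u v x : V, u ≠ v → v ≠ x → u ≠ x → c s(u, x) ≤ c s(u, v) + c s(v, x)) :
    ∃ _ : PseudoMetricSpace V, ∀ x y : V, x ≠ y → dist x y = c s(x, y) := by
  classical
  let d (x y : V) : ℝ := if x = y then 0 else c s(x, y)
  have hd_nonneg (x y : V) : 0 ≤ d x y := by
    unfold d
    split_ifs
    exacts [le_rfl, hc _]
  have hd_triangle (x y z : V) : d x z ≤ d x y + d y z := by
    by_cases hxz : x = z
    · exact (if_pos hxz).trans_le (add_nonneg (hd_nonneg x y) (hd_nonneg y z))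
    by_cases hxy : x = y
    · simp [d, hxy]
    by_cases hyz : y = z
    · simp [d, hyz]
    simpa only [d, if_neg hxz, if_neg hxy, if_neg hyz] using htri x y z hxy hyz hxz
  exact ⟨{ dist := d
           dist_self := fun x => if_pos rfl
           dist_comm := fun x y => by simp only [d, eq_comm, Sym2.eq_swap]
           dist_triangle := hd_triangle }, fun x y hxy => if_neg hxy⟩

theorem IsCycleCover.exists_permLength_le [Fintype V] [PseudoMetricSpace V] {σ₀ : Equiv.Perm V}
    (hσ₀ : IsCycleCover σ₀) {c : Sym2 V → ℝ} (hc : ∀ u v : V, dist u v ≤ c s(u, v)) {p : ℕ}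
    (hp : 5 * p < Nat.card V + 5) {T : SimpleGraph V} (hT : Nat.card T.ConnectedComponent ≤ p) :
    ∃ σ : Equiv.Perm V, IsCycleCover σ ∧ numCycles σ = p ∧
      permLength σ ≤ max (2 * permLength σ₀) (permLength σ₀ + 2 * ∑ᶠ e ∈ T.edgeSet, c e) := by
  rcases le_total (numCycles σ₀) p with hle | hge
  · obtain ⟨σ, hσ, hseg, hcard⟩ := hσ₀.exists_isSegmentation hle hp
    exact ⟨σ, hσ, hcard, le_max_of_le_left hseg.permLength_le⟩
  · obtain ⟨σ, hσ, hcard, hlen⟩ :=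
      hσ₀.exists_numCycles_eq_of_card_connectedComponent_le hc hge hT
    exact ⟨σ, hσ, hcard, le_max_of_le_right hlen⟩

theorem approximation_guarantee_general [Finite V] {c : Sym2 V → ℝ} (hc : ∀ e, 0 ≤ c e)
    (htri : ∀ u v x : V, u ≠ v → v ≠ x → u ≠ x → c s(u, x) ≤ c s(u, v) + c s(v, x))
    {p : ℕ} (hp : 5 * p < Nat.card V + 5) {F T : (⊤ : SimpleGraph V).Subgraph}
    (hF : IsTwoFactor F) (hT : T.IsSpanning) (hTp : Nat.card T.coe.ConnectedComponent ≤ p) :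
    ∃ H : (⊤ : SimpleGraph V).Subgraph, IsHpMedianSolution p H ∧ subgraphWeight c H ≤
      max (2 * subgraphWeight c F) (subgraphWeight c F + 2 * subgraphWeight c T) := by
  have := Fintype.ofFinite V
  obtain ⟨_, hdist⟩ := exists_pseudoMetricSpace_dist_eq hc htri
  have hdist_le (x y : V) : dist x y ≤ c s(x, y) := by
    rcases eq_or_ne x y with rfl | hxy
    exacts [(_root_.dist_self x).trans_le (hc _), (hdist x y hxy).le]
  obtain ⟨σ₀, hσ₀, hF₀⟩ := exists_isCycleCover_permGraph_eq (G := F.spanningCoe) hF.2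
  rw [card_connectedComponent_coe_of_isSpanning hT] at hTp
  obtain ⟨σ, hσ, rfl, hlen⟩ := hσ₀.exists_permLength_le hdist_le hp hTp
  obtain ⟨H, hH, hHσ⟩ := hσ.exists_isHpMedianSolution
  refine ⟨H, hH, ?_⟩
  simpa only [subgraphWeight_eq_finsum_spanningCoe, hHσ, ← hF₀,
    hσ.finsum_mem_edgeSet_permGraph hdist, hσ₀.finsum_mem_edgeSet_permGraph hdist] using hlen

theorem five_mul_lt_of_le_ceil {n p : ℕ}
    (h : (p : ℤ) ≤ ⌈((n : ℚ) - 2 * (⌈(n : ℚ) / 5⌉ : ℚ)) / 3⌉) : 5 * p < n + 5 := by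
  have hp : ((p - 1 : ℤ) : ℚ) < ((n : ℚ) - 2 * (⌈(n : ℚ) / 5⌉ : ℚ)) / 3 :=
    Int.lt_ceil.1 (by lia)
  have hn := Int.le_ceil ((n : ℚ) / 5)
  push_cast at hp
  have : (5 * p : ℚ) < n + 5 := by linarith
  exact_mod_cast this

end Median

/-- in a complete graph on `n` vertices with nonnegative weights
satisfying the triangle inequality, if `1 ≤ p ≤ ⌈(n - 2⌈n/5⌉)/3⌉`, `μ₂` is the minimum
weight of a 2-factor and `μT` is the minimum weight of a spanning forest with exactly
`p` components, then there is a Hamiltonian `p`-median solution of weight at most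
`max (2μ₂) (μ₂ + 2μT)`. -/
theorem approximation_guarantee {V : Type*} [Fintype V] (n : ℕ) (hn : Fintype.card V = n)
    (c : Sym2 V → ℝ) (hc : ∀ e, 0 ≤ c e)
    (htri : ∀ u v x : V, u ≠ v → v ≠ x → u ≠ x → c s(u, x) ≤ c s(u, v) + c s(v, x))
    (p : ℕ) (hp1 : 1 ≤ p) (hpb : (p : ℤ) ≤ ⌈((n : ℚ) - 2 * (⌈(n : ℚ) / 5⌉ : ℚ)) / 3⌉)
    (μ₂ μT : ℝ)
    (hμ₂ : IsLeast {x | ∃ F : (⊤ : SimpleGraph V).Subgraph, IsTwoFactor F ∧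
      subgraphWeight c F = x} μ₂)
    (hμT : IsLeast {x | ∃ T : (⊤ : SimpleGraph V).Subgraph, T.IsSpanning ∧
      T.coe.IsAcyclic ∧ Nat.card T.coe.ConnectedComponent = p ∧
      subgraphWeight c T = x} μT) :
    ∃ H : (⊤ : SimpleGraph V).Subgraph, IsHpMedianSolution p H ∧
      subgraphWeight c H ≤ max (2 * μ₂) (μ₂ + 2 * μT) := by
  obtain ⟨⟨F, hF, rfl⟩, -⟩ := hμ₂
  obtain ⟨⟨T, hT, -, hTp, rfl⟩, -⟩ := hμT
  have hp : 5 * p < Nat.card V + 5 :=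
    Nat.card_eq_fintype_card.trans hn ▸ five_mul_lt_of_le_ceil hpb
  exact approximation_guarantee_general hc htri hp hF hT hTp.le
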